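/- (Telescoped dynamics-mismatch bound.) Let P and P̂ be two dynamics, π a policy, and for t ≥ 1 set ε_t^m := E_{(s,a)∼ν_{t-1}^{π,P̂}}[D_TV(P̂(·|s,a), P(·|s,a))]. Then for every t ≥ 0, the state-action distributions at time t under the model and under the true dynamics satisfy D_TV(ν_t^{π,P̂}, ν_t^{π,P}) ≤ Σ_{i=1}^{t} ε_i^m (with the empty sum equal to 0 at t = 0). -/

import Mathlib

open scoped ENNReal

noncomputable section

/-- Total variation distance between two probability mass functions on a countable type:
`D_TV(p, q) = (1/2) * Σ_x |p(x) - q(x)|`. -/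
def tv {X : Type*} (p q : PMF X) : ℝ :=
  (1 / 2) * ∑' x : X, |(p x).toReal - (q x).toReal|

/-- The state-action distribution at time `t` under initial distribution `ρ0`, policy `π`
and dynamics `P`:  `ν_0(s,a) = ρ0(s)·π(a|s)` and
`ν_{t+1}(s',a') = Σ_{s,a} ν_t(s,a)·P(s'|s,a)·π(a'|s')`. -/
def nu {S A : Type*} (ρ0 : PMF S) (π : S → PMF A) (P : S × A → PMF S) : ℕ → PMF (S × A)
  | 0 => ρ0.bind fun s => (π s).map fun a => (s, a)
  | (t + 1) => (nu ρ0 π P t).bind fun sa =>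
      (P sa).bind fun s' => (π s').map fun a' => (s', a')

/-- The discounted return `J_P(π) = Σ_{t=0}^∞ γ^t · E_{(s,a)∼ν_t^{π,P}}[R(s,a)]`. -/
def J {S A : Type*} (R : S × A → ℝ) (γ : ℝ) (ρ0 : PMF S) (π : S → PMF A)
    (P : S × A → PMF S) : ℝ :=
  ∑' t : ℕ, γ ^ t * ∑' sa : S × A, ((nu ρ0 π P t) sa).toReal * R sa

/-!
Passing from `ν_t` to `ν_{t+1}` is one Markov step. Compare both sides with the law obtained by
taking the true step from the `ν_t` of the model. The triangle inequality leaves two errors: the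
same step applied to two laws, which cannot increase total variation, and two steps applied to the
same law, which cost at most the expected distance between the steps. As both steps end by drawing
the action from `π`, the latter is at most the expected distance between the dynamics.
-/

section Summation

variable {X Y : Type*}

theorem tsum_norm_tsum_le_tsum_tsum_norm {E : Type*} [SeminormedAddCommGroup E] {f : X × Y → E}
    (hf : Summable fun z => ‖f z‖) :
    ∑' y, ‖∑' x, f (x, y)‖ ≤ ∑' x, ∑' y, ‖f (x, y)‖ := by
  have hswap : Summable fun z : Y × X => ‖f (z.2, z.1)‖ := hf.prod_symm
  have hle : ∀ y, ‖∑' x, f (x, y)‖ ≤ ∑' x, ‖f (x, y)‖ := fun y =>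
    norm_tsum_le_tsum_norm (hswap.prod_factor y)
  calc ∑' y, ‖∑' x, f (x, y)‖
      ≤ ∑' y, ∑' x, ‖f (x, y)‖ :=
        (hswap.prod.of_nonneg_of_le (fun _ => norm_nonneg _) hle).tsum_le_tsum hle hswap.prod
    _ = ∑' x, ∑' y, ‖f (x, y)‖ := Summable.tsum_comm (f := fun x y => ‖f (x, y)‖) hf

theorem hasSum_pmf_toReal (p : PMF X) : HasSum (fun x => (p x).toReal) 1 := by
  have h := ENNReal.hasSum_toReal p.tsum_coe_ne_top
  rwa [← ENNReal.tsum_toReal_eq p.apply_ne_top, p.tsum_coe, ENNReal.toReal_one] at h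

theorem hasSum_pmf_bind_toReal (p : PMF X) (K : X → PMF Y) (y : Y) :
    HasSum (fun x => (p x).toReal * (K x y).toReal) ((p.bind K) y).toReal := by
  have hterm : ∀ x, p x * K x y ≠ ∞ := fun x =>
    ENNReal.mul_ne_top (p.apply_ne_top x) ((K x).apply_ne_top y)
  have hsum : ∑' x, p x * K x y ≠ ∞ := by
    simpa only [PMF.bind_apply] using (p.bind K).apply_ne_top y
  rw [PMF.bind_apply, ENNReal.tsum_toReal_eq hterm]
  simpa only [ENNReal.toReal_mul] using ENNReal.hasSum_toReal hsum

theorem summable_pmf_toReal_mul_toReal (p : PMF X) (K : X → PMF Y) :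
    Summable fun z : X × Y => (p z.1).toReal * (K z.1 z.2).toReal := by
  rw [summable_prod_of_nonneg fun _ => mul_nonneg ENNReal.toReal_nonneg ENNReal.toReal_nonneg]
  refine ⟨fun x => (hasSum_pmf_toReal (K x)).summable.mul_left (p x).toReal, ?_⟩
  simpa only [tsum_mul_left, (hasSum_pmf_toReal _).tsum_eq, mul_one] using
    (hasSum_pmf_toReal p).summable

end Summation

section TotalVariation

variable {X Y : Type*}

theorem summable_abs_pmf_toReal_sub (p q : PMF X) :
    Summable fun x => |(p x).toReal - (q x).toReal| :=
  ((hasSum_pmf_toReal p).summable.sub (hasSum_pmf_toReal q).summable).abs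

@[simp]
theorem tv_self (p : PMF X) : tv p p = 0 := by
  simp [tv]

theorem tv_nonneg (p q : PMF X) : 0 ≤ tv p q :=
  mul_nonneg one_half_pos.le (tsum_nonneg fun _ => abs_nonneg _)

theorem tv_le_one (p q : PMF X) : tv p q ≤ 1 := by
  have hpoint : ∀ x, |(p x).toReal - (q x).toReal| ≤ (p x).toReal + (q x).toReal := fun x => by
    simpa only [ENNReal.abs_toReal] using abs_sub (p x).toReal (q x).toReal
  have hmass : HasSum (fun x => (p x).toReal + (q x).toReal) (1 + 1) :=
    (hasSum_pmf_toReal p).add (hasSum_pmf_toReal q)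
  have hle := hasSum_le hpoint (summable_abs_pmf_toReal_sub p q).hasSum hmass
  unfold tv
  linarith

theorem tv_triangle (p q r : PMF X) : tv p r ≤ tv p q + tv q r := by
  have hpq := summable_abs_pmf_toReal_sub p q
  have hqr := summable_abs_pmf_toReal_sub q r
  have hle := hasSum_le (fun x => abs_sub_le (p x).toReal (q x).toReal (r x).toReal)
    (summable_abs_pmf_toReal_sub p r).hasSum (hpq.hasSum.add hqr.hasSum)
  unfold tv
  linarith

theorem summable_pmf_toReal_mul_tv (p : PMF X) (K L : X → PMF Y) :
    Summable fun x => (p x).toReal * tv (K x) (L x) :=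
  (hasSum_pmf_toReal p).summable.of_nonneg_of_le
    (fun _ => mul_nonneg ENNReal.toReal_nonneg (tv_nonneg _ _))
    (fun _ => mul_le_of_le_one_right ENNReal.toReal_nonneg (tv_le_one _ _))

/-- The right-hand side is the total variation distance between the joint laws on `X × Y`. -/
theorem tv_bind_bind_le_tsum_tsum (p q : PMF X) (K L : X → PMF Y) :
    tv (p.bind K) (q.bind L) ≤
      1 / 2 * ∑' x, ∑' y, |(p x).toReal * (K x y).toReal - (q x).toReal * (L x y).toReal| := by
  have hsum := (summable_pmf_toReal_mul_toReal p K).sub (summable_pmf_toReal_mul_toReal q L)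
  have hbind : ∀ y, ∑' x, ((p x).toReal * (K x y).toReal - (q x).toReal * (L x y).toReal) =
      ((p.bind K) y).toReal - ((q.bind L) y).toReal := fun y =>
    ((hasSum_pmf_bind_toReal p K y).sub (hasSum_pmf_bind_toReal q L y)).tsum_eq
  have hle := tsum_norm_tsum_le_tsum_tsum_norm hsum.norm
  simp only [Real.norm_eq_abs, hbind] at hle
  exact mul_le_mul_of_nonneg_left hle one_half_pos.le

theorem tv_bind_right_le (p q : PMF X) (K : X → PMF Y) :
    tv (p.bind K) (q.bind K) ≤ tv p q := by
  have h := tv_bind_bind_le_tsum_tsum p q K K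
  simp only [← sub_mul, abs_mul, ENNReal.abs_toReal, tsum_mul_left,
    (hasSum_pmf_toReal _).tsum_eq, mul_one] at h
  exact h

theorem tv_bind_left_le_tsum (p : PMF X) (K L : X → PMF Y) :
    tv (p.bind K) (p.bind L) ≤ ∑' x, (p x).toReal * tv (K x) (L x) := by
  have h := tv_bind_bind_le_tsum_tsum p p K L
  simpa only [tv, ← mul_sub, abs_mul, ENNReal.abs_toReal, tsum_mul_left,
    mul_left_comm _ (1 / 2 : ℝ)] using h

theorem tv_bind_bind_le_add (p q : PMF X) (K L : X → PMF Y) :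
    tv (p.bind K) (q.bind L) ≤ tv p q + ∑' x, (p x).toReal * tv (K x) (L x) :=
  calc tv (p.bind K) (q.bind L)
      ≤ tv (p.bind K) (p.bind L) + tv (p.bind L) (q.bind L) := tv_triangle _ _ _
    _ ≤ ∑' x, (p x).toReal * tv (K x) (L x) + tv p q :=
        add_le_add (tv_bind_left_le_tsum p K L) (tv_bind_right_le p q L)
    _ = tv p q + ∑' x, (p x).toReal * tv (K x) (L x) := add_comm _ _

theorem tsum_toReal_mul_tv_bind_le {Z : Type*} (p : PMF X) (K L : X → PMF Y) (M : Y → PMF Z) :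
    ∑' x, (p x).toReal * tv ((K x).bind M) ((L x).bind M) ≤
      ∑' x, (p x).toReal * tv (K x) (L x) :=
  (summable_pmf_toReal_mul_tv p _ _).tsum_le_tsum
    (fun x => mul_le_mul_of_nonneg_left (tv_bind_right_le (K x) (L x) M) ENNReal.toReal_nonneg)
    (summable_pmf_toReal_mul_tv p K L)

end TotalVariation

theorem tv_nu_succ_le {S A : Type*} (P Phat : S × A → PMF S) (π : S → PMF A) (ρ0 : PMF S)
    (t : ℕ) :
    tv (nu ρ0 π Phat (t + 1)) (nu ρ0 π P (t + 1)) ≤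
      tv (nu ρ0 π Phat t) (nu ρ0 π P t) +
        ∑' sa : S × A, ((nu ρ0 π Phat t) sa).toReal * tv (Phat sa) (P sa) :=
  (tv_bind_bind_le_add _ _ _ _).trans
    (add_le_add_right (tsum_toReal_mul_tv_bind_le _ Phat P _) _)

theorem tv_nu_le_sum_model_errors_general {S A : Type*}
    (P Phat : S × A → PMF S) (π : S → PMF A) (ρ0 : PMF S)
    (εm : ℕ → ℝ)
    (hεm : ∀ i : ℕ, εm (i + 1) =
      ∑' sa : S × A, ((nu ρ0 π Phat i) sa).toReal * tv (Phat sa) (P sa)) (t : ℕ) :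
    tv (nu ρ0 π Phat t) (nu ρ0 π P t) ≤ ∑ i ∈ Finset.range t, εm (i + 1) := by
  induction t with
  | zero => exact (tv_self _).le
  | succ t ih =>
    calc tv (nu ρ0 π Phat (t + 1)) (nu ρ0 π P (t + 1))
        ≤ tv (nu ρ0 π Phat t) (nu ρ0 π P t) + εm (t + 1) := by
          rw [hεm]
          exact tv_nu_succ_le P Phat π ρ0 t
      _ ≤ ∑ i ∈ Finset.range t, εm (i + 1) + εm (t + 1) := by gcongr
      _ = ∑ i ∈ Finset.range (t + 1), εm (i + 1) := (Finset.sum_range_succ _ _).symm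

/-- **Telescoped dynamics-mismatch bound.**  For every `t ≥ 0`,
`D_TV(ν_t^{π,P̂}, ν_t^{π,P}) ≤ Σ_{i=1}^t ε_i^m`. -/
theorem tv_nu_le_sum_model_errors {S A : Type*} [Countable S] [Countable A]
    (P Phat : S × A → PMF S) (π : S → PMF A) (ρ0 : PMF S)
    (εm : ℕ → ℝ)
    (hεm : ∀ i : ℕ, εm (i + 1) =
      ∑' sa : S × A, ((nu ρ0 π Phat i) sa).toReal * tv (Phat sa) (P sa)) :
    ∀ t : ℕ, tv (nu ρ0 π Phat t) (nu ρ0 π P t) ≤ ∑ i ∈ Finset.range t, εm (i + 1) :=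
  tv_nu_le_sum_model_errors_general P Phat π ρ0 εm hεm
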